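/- arXiv:1212.5158 — 2 statements merged into one kernel-verified Lean document; each statement's English description precedes it below -/
import Mathlib

section
/- Let h = (h_1,…,h_n) ∈ (ℂ*)^n and let θ_h be the ℂ-algebra automorphism of A = ℂ[x_1,…,x_n] determined by θ_h(x_j) = h_j x_j for 1 ≤ j ≤ n. Suppose there exist scalars σ_i, τ_i ∈ ℂ* with θ_h(s_i) = σ_i s_i and θ_h(t_i) = τ_i t_i for 1 ≤ i ≤ n−2, and set ρ(h) = σ_1 τ_1 σ_2 τ_2 ⋯ σ_{n−2} τ_{n−2}. Then θ_h is a Poisson automorphism of A (i.e. θ_h({f,g}) = {θ_h(f), θ_h(g)} for all f, g ∈ A) if and only if ρ(h) = h_1 h_2 ⋯ h_n. -/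
/- STATEMENT 5: For h ∈ (ℂ*)^n, the automorphism θ_h : x_j ↦ h_j x_j of A = ℂ[x_1,…,x_n]
with θ_h(s_i) = σ_i s_i, θ_h(t_i) = τ_i t_i is a Poisson automorphism iff
ρ(h) = σ_1τ_1⋯σ_{n−2}τ_{n−2} equals h_1h_2⋯h_n.  (Here n = m + 2.) -/

noncomputable section
open MvPolynomial

/-- The polynomial algebra `A = ℂ[x_1,…,x_{m+2}]`. -/
abbrev PA (m : ℕ) : Type := MvPolynomial (Fin (m + 2)) ℂ

/-- The rational function field `B = ℂ(x_1,…,x_{m+2})`. -/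
abbrev FB (m : ℕ) : Type := FractionRing (PA m)

/-- The rows of the matrix computing the Poisson bracket on `A`: ∇f, ∇g and, for
each `i`, `t_i²∇(s_i/t_i) = t_i∇s_i − s_i∇t_i`. -/
def pbrRows {m : ℕ} (s t : Fin m → PA m) (f g : PA m) :
    Fin (m + 2) → Fin (m + 2) → PA m :=
  Fin.cons (fun j => pderiv j f)
    (Fin.cons (fun j => pderiv j g)
      (fun k => fun j => t k * pderiv j (s k) - s k * pderiv j (t k)))

/-- The Poisson bracket `{f,g} = (t_1⋯t_m)²·Jac(f,g,s_1/t_1,…,s_m/t_m)` restricted to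
the polynomial algebra `A`. -/
def pbr {m : ℕ} (s t : Fin m → PA m) (f g : PA m) : PA m :=
  Matrix.det (Matrix.of (pbrRows s t f g))

/-!
Since `∂_j ∘ θ_h = h_j (θ_h ∘ ∂_j)`, comparing Jacobian determinants gives
`ρ(h) {θ_h f, θ_h g} = (∏ h_j) θ_h {f, g}`, so the equivalence holds as soon as the bracket is not
identically zero. Two of the variables complete the algebraically independent family `s_i / t_i` to
a transcendence basis. Up to the factor `(∏ t_i)²`, their bracket is the Jacobian determinant of
this basis. If it vanished, a kernel vector `v` would give a nonzero derivation `∑ v_j ∂_j` killing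
the basis, which is impossible in characteristic zero.
-/

section Derivation

open scoped TensorProduct KaehlerDifferential

theorem derivation_sum_apply {R A M κ : Type*} [CommSemiring R] [CommSemiring A] [AddCommMonoid M]
    [Algebra R A] [Module A M] [Module R M] (D : κ → Derivation R A M) (u : Finset κ) (x : A) :
    (∑ k ∈ u, D k) x = ∑ k ∈ u, D k x :=
  map_sum ((Pi.evalAddMonoidHom _ x).comp Derivation.coeFnAddMonoidHom) D u

/-- The extension of a derivation `D : S → M` along a formally étale algebra `S → T`, for `M` a
`T`-module. It is used for the localization `T` of `S` at its nonzero elements. -/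
def derivationExtend {R S : Type*} (T : Type*) {M : Type*} [CommRing R] [CommRing S] [CommRing T]
    [Algebra R S] [Algebra R T] [Algebra S T] [IsScalarTower R S T] [Algebra.FormallyEtale S T]
    [AddCommGroup M] [Module R M] [Module S M] [Module T M] [IsScalarTower R S M]
    [IsScalarTower R T M] [IsScalarTower S T M] (D : Derivation R S M) : Derivation R T M :=
  (D.liftKaehlerDifferential.liftBaseChange T ∘ₗ
    (KaehlerDifferential.tensorKaehlerEquivOfFormallyEtale R S T).symm.toLinearMap).compDer
      (KaehlerDifferential.D R T)

theorem derivationExtend_algebraMap {R S T M : Type*} [CommRing R] [CommRing S] [CommRing T]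
    [Algebra R S] [Algebra R T] [Algebra S T] [IsScalarTower R S T] [Algebra.FormallyEtale S T]
    [AddCommGroup M] [Module R M] [Module S M] [Module T M] [IsScalarTower R S M]
    [IsScalarTower R T M] [IsScalarTower S T M] (D : Derivation R S M) (x : S) :
    derivationExtend T D (algebraMap S T x) = D x := by
  simp [derivationExtend, KaehlerDifferential.tensorKaehlerEquivOfFormallyEtale_symm_D_algebraMap]

theorem derivation_eq_zero_of_formallyUnramified {R S T : Type*} [CommRing R] [CommRing S]
    [CommRing T] [Algebra R T] [Algebra S T] [Algebra.FormallyUnramified S T]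
    (D : Derivation R T T) (hD : ∀ x, D (algebraMap S T x) = 0) : D = 0 := by
  let D' : Derivation S T T := Derivation.mk'
    { toFun := D
      map_add' := map_add D
      map_smul' := fun c x ↦ by simp [Algebra.smul_def, hD] }
    D.leibniz
  ext x
  change D' x = 0
  rw [← D'.liftKaehlerDifferential_comp_D, Subsingleton.elim (KaehlerDifferential.D S T x) 0,
    map_zero]

theorem derivation_eq_zero_of_mem_adjoin {K F : Type*} [Field K] [Field F] [Algebra K F]
    (D : Derivation K F F) {s : Set F} (hD : ∀ x ∈ s, D x = 0) {x : F}
    (hx : x ∈ IntermediateField.adjoin K s) : D x = 0 := by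
  induction hx using IntermediateField.adjoin_induction with
  | mem x hx => exact hD x hx
  | algebraMap r => exact D.map_algebraMap r
  | add x y _ _ hx hy => rw [map_add, hx, hy, add_zero]
  | inv x _ hx => rw [D.leibniz_inv, hx, smul_zero]
  | mul x y _ _ hx hy => rw [D.leibniz, hx, hy, smul_zero, smul_zero, add_zero]

theorem derivation_eq_zero_of_isTranscendenceBasis {ι K F : Type*} [Field K] [CharZero K] [Field F]
    [Algebra K F] {f : ι → F} (hf : IsTranscendenceBasis K f) (D : Derivation K F F)
    (hD : ∀ i, D (f i) = 0) : D = 0 := by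
  let L := IntermediateField.adjoin K (Set.range f)
  have : Algebra.IsAlgebraic L F := hf.isAlgebraic_field
  have : Algebra.FormallyUnramified L F := .of_isSeparable L F
  exact derivation_eq_zero_of_formallyUnramified (S := L) D fun x ↦
    derivation_eq_zero_of_mem_adjoin D (Set.forall_mem_range.mpr hD) x.2

end Derivation

section TranscendenceBasis

variable {R A : Type*} [CommRing R] [CommRing A] [Algebra R A]

theorem algebraicIndependent_fin_cons_iff {k : ℕ} {f : Fin k → A} {a : A} :
    AlgebraicIndependent R (Fin.cons a f : Fin (k + 1) → A) ↔
      AlgebraicIndependent R f ∧ Transcendental (Algebra.adjoin R (Set.range f)) a := by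
  rw [← AlgebraicIndependent.option_iff]
  refine (algebraicIndependent_equiv' (finSuccEquiv k).symm ?_).symm
  ext o
  cases o <;> simp

theorem exists_algebraicIndependent_cons [Nontrivial R] [IsDomain A] {ι : Type*} {y : ι → A}
    (hy : IsTranscendenceBasis R y) {k : ℕ} {f : Fin k → A} (hf : AlgebraicIndependent R f)
    (hf' : ¬ IsTranscendenceBasis R f) :
    ∃ i, AlgebraicIndependent R (Fin.cons (y i) f : Fin (k + 1) → A) := by
  rw [hf.isTranscendenceBasis_iff_isAlgebraic, hy.isAlgebraic_iff, not_forall] at hf'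
  exact hf'.imp fun i hi ↦ algebraicIndependent_fin_cons_iff.mpr ⟨hf, hi⟩

theorem exists_isTranscendenceBasis_cons_cons [Nontrivial R] [IsDomain A] {m : ℕ}
    {y : Fin (m + 2) → A} (hy : IsTranscendenceBasis R y) {f : Fin m → A}
    (hf : AlgebraicIndependent R f) :
    ∃ i j, IsTranscendenceBasis R
      (Fin.cons (y i) (Fin.cons (y j) f : Fin (m + 1) → A) : Fin (m + 2) → A) := by
  have card_eq {k : ℕ} {z : Fin k → A} (hz : IsTranscendenceBasis R z) : k = m + 2 := by
    have hcard : (k : Cardinal) = m + 2 := by simpa using hz.lift_cardinalMk_eq hy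
    exact_mod_cast hcard
  obtain ⟨j, hj⟩ := exists_algebraicIndependent_cons hy hf fun h ↦ absurd (card_eq h) (by lia)
  obtain ⟨i, hi⟩ := exists_algebraicIndependent_cons hy hj fun h ↦ absurd (card_eq h) (by lia)
  refine ⟨i, j, hi.isTranscendenceBasis_of_lift_trdeg_le_of_finite (ι := Fin (m + 2)) ?_⟩
  simpa using hy.lift_cardinalMk_eq_trdeg.ge

end TranscendenceBasis

section Jacobian

variable {ι R : Type*} [CommRing R]

theorem isTranscendenceBasis_algebraMap_X [IsDomain R] :
    IsTranscendenceBasis R fun i : ι ↦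
      algebraMap (MvPolynomial ι R) (FractionRing (MvPolynomial ι R)) (X i) :=
  have : Algebra.IsAlgebraic (MvPolynomial ι R) (FractionRing (MvPolynomial ι R)) :=
    IsLocalization.isAlgebraic _ (nonZeroDivisors _)
  (IsTranscendenceBasis.mvPolynomial ι R).algebraMap_comp

/-- The partial derivative `∂/∂x_i` on the ring of fractions of a polynomial ring. It is used to
form the Jacobian matrix of a family of fractions. -/
def fractionPderiv (i : ι) :
    Derivation R (FractionRing (MvPolynomial ι R)) (FractionRing (MvPolynomial ι R)) :=
  have : Algebra.FormallyEtale (MvPolynomial ι R) (FractionRing (MvPolynomial ι R)) :=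
    .of_isLocalization (nonZeroDivisors _)
  derivationExtend _ ((Algebra.linearMap _ _).compDer (pderiv i))

theorem fractionPderiv_algebraMap (i : ι) (p : MvPolynomial ι R) :
    fractionPderiv i (algebraMap _ (FractionRing (MvPolynomial ι R)) p) =
      algebraMap _ _ (pderiv i p) :=
  have : Algebra.FormallyEtale (MvPolynomial ι R) (FractionRing (MvPolynomial ι R)) :=
    .of_isLocalization (nonZeroDivisors _)
  derivationExtend_algebraMap _ p

/-- The Jacobian matrix `(∂f_i/∂x_j)` of a family of fractions of polynomials. -/
def fractionJacobian (f : ι → FractionRing (MvPolynomial ι R)) :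
    Matrix ι ι (FractionRing (MvPolynomial ι R)) :=
  .of fun i j ↦ fractionPderiv j (f i)

theorem det_fractionJacobian_ne_zero {K : Type*} [Field K] [CharZero K] [Fintype ι]
    [DecidableEq ι] {f : ι → FractionRing (MvPolynomial ι K)} (hf : IsTranscendenceBasis K f) :
    (fractionJacobian f).det ≠ 0 := by
  intro hdet
  obtain ⟨v, hv, hfv⟩ := Matrix.exists_mulVec_eq_zero_iff.mpr hdet
  let D := ∑ j, v j • fractionPderiv (R := K) j
  have hD (x) : D x = ∑ j, v j * fractionPderiv j x := derivation_sum_apply _ _ x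
  have hDf (i) : D (f i) = 0 := by
    simpa [hD, Matrix.mulVec, dotProduct, fractionJacobian, mul_comm] using congrFun hfv i
  have hDX (j) : D (algebraMap (MvPolynomial ι K) _ (X j)) = v j := by
    simp [hD, fractionPderiv_algebraMap, pderiv_X, Pi.single_apply, apply_ite (algebraMap _ _)]
  refine hv (funext fun j ↦ ?_)
  rw [← hDX, derivation_eq_zero_of_isTranscendenceBasis hf D hDf]
  rfl

end Jacobian

section ClearedJacobian

variable {ι : Type*}

/-- The Jacobian matrix of the fractions `s_i / t_i` with denominators cleared: its `i`-th row is
`t_i² ∇(s_i / t_i)`. -/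
def clearedJacobian {R : Type*} [CommRing R] (s t : ι → MvPolynomial ι R) :
    Matrix ι ι (MvPolynomial ι R) :=
  .of fun i j ↦ t i * pderiv j (s i) - s i * pderiv j (t i)

theorem algebraMap_det_clearedJacobian {R : Type*} [CommRing R] [IsDomain R] [Fintype ι]
    [DecidableEq ι] (s : ι → MvPolynomial ι R) {t : ι → MvPolynomial ι R} (ht : ∀ i, t i ≠ 0) :
    algebraMap _ (FractionRing (MvPolynomial ι R)) (clearedJacobian s t).det =
      algebraMap _ _ (∏ i, t i) ^ 2 *
        (fractionJacobian fun i ↦ algebraMap _ _ (s i) / algebraMap _ _ (t i)).det := by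
  have hmat : (algebraMap _ (FractionRing (MvPolynomial ι R))).mapMatrix (clearedJacobian s t) =
      .diagonal (fun i ↦ algebraMap _ _ (t i) ^ 2) *
        fractionJacobian fun i ↦ algebraMap _ _ (s i) / algebraMap _ _ (t i) := by
    ext i j
    have hti : algebraMap _ (FractionRing (MvPolynomial ι R)) (t i) ≠ 0 := by simpa using ht i
    simp only [RingHom.mapMatrix_apply, Matrix.map_apply, Matrix.diagonal_mul, clearedJacobian,
      fractionJacobian, Matrix.of_apply, Derivation.leibniz_div, fractionPderiv_algebraMap,
      smul_eq_mul, map_sub, map_mul]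
    field_simp
  rw [RingHom.map_det, hmat, Matrix.det_mul, Matrix.det_diagonal, Finset.prod_pow, map_prod]

theorem clearedJacobian_C_mul {R : Type*} [CommRing R] [Fintype ι] [DecidableEq ι] (σ τ : ι → R)
    (s t : ι → MvPolynomial ι R) :
    clearedJacobian (fun i ↦ C (σ i) * s i) (fun i ↦ C (τ i) * t i) =
      .diagonal (fun i ↦ C (σ i * τ i)) * clearedJacobian s t := by
  ext1 i j
  simp only [clearedJacobian, Matrix.of_apply, Matrix.diagonal_mul, pderiv_C_mul, C_mul]
  ring

end ClearedJacobian

section RescaleVars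

variable {ι R : Type*}

/-- The endomorphism `x_j ↦ h_j x_j` of a polynomial algebra, written `θ_h` in the paper. -/
def rescaleVars [CommSemiring R] (h : ι → R) : MvPolynomial ι R →ₐ[R] MvPolynomial ι R :=
  aeval fun j ↦ C (h j) * X j

theorem rescaleVars_injective [CommSemiring R] {h : ι → R} (hh : IsUnit h) :
    Function.Injective (rescaleVars h) := by
  obtain ⟨k, hk⟩ := hh.exists_left_inv
  have hcomp : (rescaleVars k).comp (rescaleVars h) = AlgHom.id R (MvPolynomial ι R) := by
    refine algHom_ext fun j ↦ ?_
    have hkj : h j * k j = 1 := by rw [mul_comm]; exact congrFun hk j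
    simp [rescaleVars, algHom_C, ← mul_assoc, ← C_mul, hkj]
  exact Function.LeftInverse.injective (g := rescaleVars k) (DFunLike.congr_fun hcomp)

theorem pderiv_rescaleVars [CommSemiring R] (h : ι → R) (j : ι) (p : MvPolynomial ι R) :
    pderiv j (rescaleVars h p) = C (h j) * rescaleVars h (pderiv j p) := by
  classical
  induction p using MvPolynomial.induction_on with
  | C a => simp [algHom_C]
  | add p q hp hq => simp only [map_add, hp, hq, mul_add]
  | mul_X p i hp =>
    have hX : pderiv j (rescaleVars h (X i)) = C (h j) * rescaleVars h (pderiv j (X i)) := by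
      rcases eq_or_ne i j with rfl | hij
      · simp [rescaleVars]
      · simp [rescaleVars, pderiv_X_of_ne hij]
    simp only [map_mul, map_add, Derivation.leibniz, smul_eq_mul, hp, hX]
    ring

theorem clearedJacobian_rescaleVars [CommRing R] [Fintype ι] [DecidableEq ι] (h : ι → R)
    (s t : ι → MvPolynomial ι R) :
    clearedJacobian (rescaleVars h ∘ s) (rescaleVars h ∘ t) =
      (rescaleVars h).mapMatrix (clearedJacobian s t) * .diagonal fun j ↦ C (h j) := by
  ext1 i j
  simp only [clearedJacobian, Matrix.of_apply, AlgHom.mapMatrix_apply, Matrix.map_apply,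
    Matrix.mul_diagonal, Function.comp_apply, pderiv_rescaleVars, map_sub, map_mul]
  ring

theorem det_clearedJacobian_rescaleVars [CommRing R] [Fintype ι] [DecidableEq ι] (h : ι → R)
    (s t : ι → MvPolynomial ι R) :
    (clearedJacobian (rescaleVars h ∘ s) (rescaleVars h ∘ t)).det =
      C (∏ j, h j) * rescaleVars h (clearedJacobian s t).det := by
  rw [clearedJacobian_rescaleVars, Matrix.det_mul, Matrix.det_diagonal, AlgHom.map_det, map_prod,
    mul_comm]

end RescaleVars

section PoissonBracket

variable {m : ℕ}

/-- The bracket `{f, g} = (t_1⋯t_m)² Jac(f, g, s_1/t_1, …, s_m/t_m)` over an arbitrary coefficient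
ring. The polynomials `f` and `g` enter as fractions with denominator `1`. -/
def poissonBracket {R : Type*} [CommRing R] (s t : Fin m → MvPolynomial (Fin (m + 2)) R)
    (f g : MvPolynomial (Fin (m + 2)) R) : MvPolynomial (Fin (m + 2)) R :=
  (clearedJacobian (Fin.cons f (Fin.cons g s : Fin (m + 1) → _))
    (Fin.cons 1 (Fin.cons 1 t : Fin (m + 1) → _))).det

theorem pbr_eq_poissonBracket (s t : Fin m → PA m) (f g : PA m) :
    pbr s t f g = poissonBracket s t f g := by
  refine congrArg Matrix.det (Matrix.ext fun i j ↦ ?_)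
  refine Fin.cases ?_ (Fin.cases ?_ fun k ↦ ?_) i <;> simp [pbrRows, clearedJacobian]

theorem poissonBracket_rescaleVars {R : Type*} [CommRing R]
    {s t : Fin m → MvPolynomial (Fin (m + 2)) R} {h : Fin (m + 2) → R} {σ τ : Fin m → R}
    (hs : ∀ i, rescaleVars h (s i) = C (σ i) * s i)
    (ht : ∀ i, rescaleVars h (t i) = C (τ i) * t i) (f g : MvPolynomial (Fin (m + 2)) R) :
    C (∏ i, σ i * τ i) * poissonBracket s t (rescaleVars h f) (rescaleVars h g) =
      C (∏ j, h j) * rescaleVars h (poissonBracket s t f g) := by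
  have cons_cons_rescale {u : Fin m → MvPolynomial (Fin (m + 2)) R} {c : Fin m → R}
      (hu : ∀ i, rescaleVars h (u i) = C (c i) * u i) (p q : MvPolynomial (Fin (m + 2)) R) :
      rescaleVars h ∘ (Fin.cons p (Fin.cons q u : Fin (m + 1) → _) : Fin (m + 2) → _) =
        fun i ↦ C ((Fin.cons 1 (Fin.cons 1 c : Fin (m + 1) → R) : Fin (m + 2) → R) i) *
          (Fin.cons (rescaleVars h p) (Fin.cons (rescaleVars h q) u : Fin (m + 1) → _) :
            Fin (m + 2) → _) i := by
    refine funext (Fin.cases ?_ (Fin.cases ?_ fun k ↦ ?_)) <;> simp [hu]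
  rw [poissonBracket, poissonBracket, ← det_clearedJacobian_rescaleVars, cons_cons_rescale hs,
    cons_cons_rescale ht, clearedJacobian_C_mul, Matrix.det_mul, Matrix.det_diagonal]
  simp [Fin.prod_univ_succ]

theorem exists_poissonBracket_ne_zero {K : Type*} [Field K] [CharZero K]
    {s t : Fin m → MvPolynomial (Fin (m + 2)) K} (ht : ∀ i, t i ≠ 0)
    (hind : AlgebraicIndependent K fun i ↦
      algebraMap _ (FractionRing (MvPolynomial (Fin (m + 2)) K)) (s i) / algebraMap _ _ (t i)) :
    ∃ f g, poissonBracket s t f g ≠ 0 := by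
  obtain ⟨a, b, hab⟩ := exists_isTranscendenceBasis_cons_cons isTranscendenceBasis_algebraMap_X hind
  let S : Fin (m + 2) → MvPolynomial (Fin (m + 2)) K :=
    Fin.cons (X a) (Fin.cons (X b) s : Fin (m + 1) → _)
  let T : Fin (m + 2) → MvPolynomial (Fin (m + 2)) K :=
    Fin.cons 1 (Fin.cons 1 t : Fin (m + 1) → _)
  have hT : ∀ i, T i ≠ 0 := by simpa [T, Fin.forall_fin_succ] using ht
  have hST : IsTranscendenceBasis K fun i ↦
      algebraMap _ (FractionRing (MvPolynomial (Fin (m + 2)) K)) (S i) / algebraMap _ _ (T i) := by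
    convert hab with i
    refine Fin.cases ?_ (Fin.cases ?_ fun k ↦ ?_) i <;> simp [S, T]
  refine ⟨X a, X b, fun h0 ↦ ?_⟩
  have hdet := algebraMap_det_clearedJacobian S hT
  rw [show (clearedJacobian S T).det = 0 from h0, map_zero, eq_comm, mul_eq_zero] at hdet
  exact hdet.elim (by simpa [Finset.prod_eq_zero_iff] using hT) (det_fractionJacobian_ne_zero hST)

end PoissonBracket

theorem statement_5_general {K : Type*} [Field K] [CharZero K] {m : ℕ}
    (s t : Fin m → MvPolynomial (Fin (m + 2)) K)
    (ht : ∀ i, t i ≠ 0)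
    (hind : AlgebraicIndependent K fun i ↦
      algebraMap _ (FractionRing (MvPolynomial (Fin (m + 2)) K)) (s i) / algebraMap _ _ (t i))
    (h : Fin (m + 2) → K) (hh : ∀ j, h j ≠ 0) (σ τ : Fin m → K)
    (hs : ∀ i, rescaleVars h (s i) = C (σ i) * s i)
    (htt : ∀ i, rescaleVars h (t i) = C (τ i) * t i) :
    (∀ f g, rescaleVars h (poissonBracket s t f g) =
        poissonBracket s t (rescaleVars h f) (rescaleVars h g)) ↔
      (∏ i, σ i * τ i) = ∏ j, h j := by
  have hbracket := poissonBracket_rescaleVars hs htt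
  constructor
  · intro hθ
    obtain ⟨f, g, hfg⟩ := exists_poissonBracket_ne_zero ht hind
    have hinj := rescaleVars_injective (Pi.isUnit_iff.mpr fun j ↦ (hh j).isUnit)
    have hne : rescaleVars h (poissonBracket s t f g) ≠ 0 := (map_ne_zero_iff _ hinj).mpr hfg
    have hfactor := hbracket f g
    rw [← hθ] at hfactor
    exact C_injective _ _ (mul_right_cancel₀ hne hfactor)
  · intro hρ f g
    have hne : (C (∏ j, h j) : MvPolynomial (Fin (m + 2)) K) ≠ 0 :=
      C_ne_zero.mpr (Finset.prod_ne_zero_iff.mpr fun j _ ↦ hh j)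
    have hfactor := hbracket f g
    rw [hρ] at hfactor
    exact (mul_left_cancel₀ hne hfactor).symm

theorem statement_5 {m : ℕ} (hm : 1 ≤ m)
    (s t : Fin m → PA m)
    (ht : ∀ i, t i ≠ 0)
    (hcop : ∀ i, ∀ d : PA m, d ∣ s i → d ∣ t i → IsUnit d)
    (hind : AlgebraicIndependent ℂ
      (fun i => algebraMap (PA m) (FB m) (s i) / algebraMap (PA m) (FB m) (t i)))
    (h : Fin (m + 2) → ℂ) (hh : ∀ j, h j ≠ 0)
    (θ : PA m →ₐ[ℂ] PA m) (hθ : θ = aeval (fun j => C (h j) * X j))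
    (σ τ : Fin m → ℂ) (hσ : ∀ i, σ i ≠ 0) (hτ : ∀ i, τ i ≠ 0)
    (hs : ∀ i, θ (s i) = C (σ i) * s i)
    (htt : ∀ i, θ (t i) = C (τ i) * t i) :
    (∀ f g : PA m, θ (pbr s t f g) = pbr s t (θ f) (θ g)) ↔
      (∏ i, σ i * τ i) = ∏ j, h j := by
  obtain rfl : θ = rescaleVars h := hθ
  simpa only [pbr_eq_poissonBracket] using
    statement_5_general s t ht hind h hh σ τ hs htt

end
end

section
/- Let γ be dense, let I be an ideal of C_γ, and let Q be a prime ideal of A_γ that is minimal over the extended ideal I·A_γ. Then Q is a Poisson prime ideal of A_γ, i.e. {q, r} ∈ Q for all q ∈ Q and r ∈ A_γ. -/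
/- STATEMENT 8: Let γ be dense, I an ideal of C_γ, and Q a prime ideal of A_γ minimal
over I·A_γ.  Then Q is a Poisson prime ideal of A_γ. -/

set_option synthInstance.maxHeartbeats 1000000
set_option maxHeartbeats 1000000

noncomputable section
open MvPolynomial

/-- `D` is the family of partial derivatives `∂/∂x_j` extended to the rational function
field. -/
def IsPartialDerivs {m : ℕ} (D : Fin (m + 2) → Derivation ℂ (FB m) (FB m)) : Prop :=
  ∀ (j : Fin (m + 2)) (p : PA m),
    D j (algebraMap (PA m) (FB m) p) = algebraMap (PA m) (FB m) (pderiv j p)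

/-- The Jacobian determinant `Jac(b_1,…,b_n) = det(∂_j b_i)`. -/
def Jac {m : ℕ} (D : Fin (m + 2) → Derivation ℂ (FB m) (FB m))
    (b : Fin (m + 2) → FB m) : FB m :=
  Matrix.det (Matrix.of fun i j => D j (b i))

/-- The Poisson bracket `{f,g} = (t_1⋯t_m)²·Jac(f,g,s_1/t_1,…,s_m/t_m)` on `B`. -/
def brB {m : ℕ} (D : Fin (m + 2) → Derivation ℂ (FB m) (FB m))
    (s t : Fin m → PA m) (f g : FB m) : FB m :=
  algebraMap (PA m) (FB m) ((∏ i, t i) ^ 2) *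
    Jac D (Fin.cons f (Fin.cons g
      (fun i => algebraMap (PA m) (FB m) (s i) / algebraMap (PA m) (FB m) (t i))))

/-- The set `S_γ = {s_i : γ_i = 1} ∪ {t_i : δ_i = 1}`. -/
def Sgam {m : ℕ} (s t : Fin m → PA m) (γ : Fin m → Bool × Bool) : Set (PA m) :=
  {x | ∃ i, (γ i).1 = true ∧ x = s i} ∪ {x | ∃ i, (γ i).2 = true ∧ x = t i}

/-- The localization `A_γ = M_γ⁻¹A`, viewed as a subring of `B`: the subalgebra of `B`
generated by (the image of) `A` together with the inverses of the elements of `S_γ`. -/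
def Agam {m : ℕ} (s t : Fin m → PA m) (γ : Fin m → Bool × Bool) : Subalgebra ℂ (FB m) :=
  Algebra.adjoin ℂ
    (Set.range (algebraMap (PA m) (FB m)) ∪
      ((fun x => (algebraMap (PA m) (FB m) x)⁻¹) '' Sgam s t γ))

/-- `v_i = s_i/t_i` if `δ_i = 1` and `v_i = t_i/s_i` otherwise. -/
def vgam {m : ℕ} (s t : Fin m → PA m) (γ : Fin m → Bool × Bool) (i : Fin m) : FB m :=
  if (γ i).2 then algebraMap (PA m) (FB m) (s i) / algebraMap (PA m) (FB m) (t i)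
  else algebraMap (PA m) (FB m) (t i) / algebraMap (PA m) (FB m) (s i)

/-- `C_γ`, the ℂ-subalgebra generated by `v_1,…,v_m`. -/
def Cgam {m : ℕ} (s t : Fin m → PA m) (γ : Fin m → Bool × Bool) : Subalgebra ℂ (FB m) :=
  Algebra.adjoin ℂ (Set.range (vgam s t γ))

/-! If an ideal is stable under a derivation `d` of a `ℚ`-algebra, so is each of its minimal
primes `P`: the elements all of whose `d`-iterates lie in `P` form the kernel of the ring
homomorphism `R → (R ⧸ P)⟦X⟧`, `a ↦ ∑ dⁿ(a) Xⁿ / n!`, whose target is a domain, so they form a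
prime ideal between the given ideal and `P`, and this prime is `P` by minimality.

Here `d` is a Hamiltonian derivation `{·, r}` of `A_γ`. Since a Jacobian with a repeated row
vanishes, it kills every `s_i / t_i`, hence all of `C_γ`, and so preserves `I·A_γ`. That the
bracket preserves `A_γ` is the quotient rule: the factor `t_i²` clears the denominators of
the row `∂_j (s_i / t_i)`. -/

section TaylorSeries

variable {k R : Type*} [CommRing k] [CommRing R] [Algebra k R] [Algebra ℚ R]

/-- The Taylor series `∑ dⁿ(a) Xⁿ / n!` of `a` along the flow of the derivation `d`. -/
def taylorSeries (d : Derivation k R R) (a : R) : PowerSeries R :=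
  PowerSeries.mk fun n => (n.factorial : ℚ)⁻¹ • d^[n] a

theorem coeff_taylorSeries (d : Derivation k R R) (a : R) (n : ℕ) :
    PowerSeries.coeff n (taylorSeries d a) = (n.factorial : ℚ)⁻¹ • d^[n] a :=
  PowerSeries.coeff_mk _ _

theorem constantCoeff_taylorSeries (d : Derivation k R R) (a : R) :
    PowerSeries.constantCoeff (taylorSeries d a) = a := by
  simp [← PowerSeries.coeff_zero_eq_constantCoeff_apply, coeff_taylorSeries]

theorem taylorSeries_add (d : Derivation k R R) (a b : R) :
    taylorSeries d (a + b) = taylorSeries d a + taylorSeries d b := by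
  ext n
  simp only [map_add, coeff_taylorSeries, iterate_map_add, smul_add]

theorem derivative_taylorSeries (d : Derivation k R R) (a : R) :
    PowerSeries.derivative R (taylorSeries d a) = taylorSeries d (d a) := by
  ext n
  have hn : ((n : ℚ) + 1) ≠ 0 := n.cast_add_one_ne_zero
  rw [PowerSeries.coeff_derivative, coeff_taylorSeries, coeff_taylorSeries,
    Function.iterate_succ_apply, mul_comm, ← Nat.cast_succ, ← nsmul_eq_mul,
    ← Nat.cast_smul_eq_nsmul ℚ, smul_smul, Nat.factorial_succ]
  congr 1
  push_cast
  field_simp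

theorem taylorSeries_mul (d : Derivation k R R) (a b : R) :
    taylorSeries d (a * b) = taylorSeries d a * taylorSeries d b := by
  ext n
  induction n generalizing a b with
  | zero => simp [constantCoeff_taylorSeries]
  | succ n ih =>
    have hderiv : PowerSeries.coeff n (PowerSeries.derivative R (taylorSeries d (a * b))) =
        PowerSeries.coeff n
          (PowerSeries.derivative R (taylorSeries d a * taylorSeries d b)) := by
      simp only [derivative_taylorSeries, Derivation.leibniz, smul_eq_mul, taylorSeries_add,
        map_add, ih]
    have hunit : IsUnit ((n : R) + 1) := by
      simpa using (IsUnit.mk0 ((n : ℚ) + 1) n.cast_add_one_ne_zero).map (algebraMap ℚ R)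
    rw [PowerSeries.coeff_derivative, PowerSeries.coeff_derivative] at hderiv
    exact hunit.mul_right_cancel hderiv

/-- `taylorSeries d` as a ring homomorphism. -/
def taylorSeriesHom (d : Derivation k R R) : R →+* PowerSeries R :=
  RingHom.mk'
    { toFun := taylorSeries d
      map_one' := by
        ext n
        cases n <;> simp [coeff_taylorSeries, PowerSeries.coeff_one]
      map_mul' := taylorSeries_mul d }
    (taylorSeries_add d)

/-- The differential core of an ideal `P`: the largest `d`-stable ideal contained in `P`, encoded
as the kernel of the Taylor series homomorphism modulo `P`. -/
def differentialCore (d : Derivation k R R) (P : Ideal R) : Ideal R :=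
  RingHom.ker ((PowerSeries.map (Ideal.Quotient.mk P)).comp (taylorSeriesHom d))

instance differentialCore_isPrime (d : Derivation k R R) (P : Ideal R) [P.IsPrime] :
    (differentialCore d P).IsPrime :=
  RingHom.ker_isPrime _

theorem mem_differentialCore {d : Derivation k R R} {P : Ideal R} {a : R} :
    a ∈ differentialCore d P ↔ ∀ n, d^[n] a ∈ P := by
  have hcoeff (n : ℕ) : (n.factorial : ℚ)⁻¹ • d^[n] a ∈ P ↔ d^[n] a ∈ P := by
    have hunit : IsUnit (n.factorial : ℚ)⁻¹ :=
      (inv_ne_zero (Nat.cast_ne_zero.2 n.factorial_ne_zero)).isUnit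
    rw [Algebra.smul_def, Ideal.unit_mul_mem_iff_mem P (hunit.map (algebraMap ℚ R))]
  calc a ∈ differentialCore d P
    _ ↔ ∀ n, Ideal.Quotient.mk P (PowerSeries.coeff n (taylorSeries d a)) = 0 := by
      rw [differentialCore, RingHom.mem_ker, PowerSeries.ext_iff]
      rfl
    _ ↔ ∀ n, d^[n] a ∈ P := by
      simp only [Ideal.Quotient.eq_zero_iff_mem, coeff_taylorSeries, hcoeff]

theorem mapsTo_of_mem_minimalPrimes {d : Derivation k R R} {I P : Ideal R}
    (hI : Set.MapsTo d I I) (hP : P ∈ I.minimalPrimes) : Set.MapsTo d P P := by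
  have : P.IsPrime := hP.1.1
  have hIcore : I ≤ differentialCore d P := fun a ha =>
    mem_differentialCore.2 fun n => hP.1.2 (hI.iterate n ha)
  have hcoreP : differentialCore d P ≤ P := fun a ha => mem_differentialCore.1 ha 0
  have hPcore : P ≤ differentialCore d P := hP.2 ⟨inferInstance, hIcore⟩ hcoreP
  exact fun a ha => mem_differentialCore.1 (hPcore ha) 1

end TaylorSeries

section StableSubobjects

variable {k A : Type*} [CommRing k] [CommRing A] [Algebra k A]

theorem mapsTo_span_of_forall_mem_span {d : Derivation k A A} {X : Set A}
    (hX : ∀ x ∈ X, d x ∈ Ideal.span X) : Set.MapsTo d (Ideal.span X) (Ideal.span X) := by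
  intro x hx
  induction hx using Submodule.span_induction with
  | mem x hx => exact hX x hx
  | zero => simp
  | add x y _ _ hdx hdy => exact (d.map_add x y).symm ▸ add_mem hdx hdy
  | smul a x hx hdx =>
    rw [smul_eq_mul, Derivation.leibniz]
    exact add_mem (Ideal.mul_mem_left _ a hdx) (Ideal.mul_mem_right (d a) _ hx)

theorem mapsTo_adjoin_of_forall_mem_adjoin {d : Derivation k A A} {X : Set A}
    (hX : ∀ x ∈ X, d x ∈ Algebra.adjoin k X) :
    Set.MapsTo d (Algebra.adjoin k X) (Algebra.adjoin k X) := by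
  intro x hx
  induction hx using Algebra.adjoin_induction with
  | mem x hx => exact hX x hx
  | algebraMap r => simp
  | add x y _ _ hdx hdy => exact (d.map_add x y).symm ▸ add_mem hdx hdy
  | mul x y hx hy hdx hdy =>
    rw [Derivation.leibniz]
    exact add_mem (mul_mem hx hdy) (mul_mem hy hdx)

/-- The restriction of a derivation to a subalgebra that it maps into itself. -/
def restrictDerivation (d : Derivation k A A) (S : Subalgebra k A) (hS : Set.MapsTo d S S) :
    Derivation k S S :=
  Derivation.mk' ((d : A →ₗ[k] A).restrict (p := Subalgebra.toSubmodule S)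
    (q := Subalgebra.toSubmodule S) hS) fun a b => Subtype.ext (d.leibniz a b)

theorem det_mem_subalgebra {n : Type*} [Fintype n] [DecidableEq n] (S : Subalgebra k A)
    {M : Matrix n n A} (hM : ∀ i j, M i j ∈ S) : M.det ∈ S := by
  let N : Matrix n n S := Matrix.of fun i j => ⟨M i j, hM i j⟩
  have hN : (N.det : A) = M.det := S.val.map_det N
  exact hN ▸ N.det.2

end StableSubobjects

section JacobianDerivation

variable {k A : Type*} [CommRing k] [CommRing A] [Algebra k A] {n : ℕ}

/-- The derivation `f ↦ det (D_j f; D_j b_1; …; D_j b_n)`, given by its Laplace expansion along the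
first row. -/
def jacobianDerivation (D : Fin (n + 1) → Derivation k A A) (b : Fin n → A) :
    Derivation k A A :=
  ∑ j : Fin (n + 1), ((-1) ^ (j : ℕ) * (Matrix.of fun i l => D (j.succAbove l) (b i)).det) • D j

theorem jacobianDerivation_apply (D : Fin (n + 1) → Derivation k A A) (b : Fin n → A) (f : A) :
    jacobianDerivation D b f =
      (Matrix.of fun i j => D j ((Fin.cons f b : Fin (n + 1) → A) i)).det := by
  have hminor (j : Fin (n + 1)) :
      (Matrix.of fun i l => D l ((Fin.cons f b : Fin (n + 1) → A) i)).submatrix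
        Fin.succ j.succAbove = Matrix.of fun i l => D (j.succAbove l) (b i) := by
    ext i l
    simp
  rw [Matrix.det_succ_row_zero, jacobianDerivation, ← Derivation.coeFnAddMonoidHom_apply, map_sum,
    Finset.sum_apply]
  refine Finset.sum_congr rfl fun j _ => ?_
  rw [hminor, Derivation.coeFnAddMonoidHom_apply, Derivation.smul_apply, smul_eq_mul,
    Matrix.of_apply, Fin.cons_zero, mul_right_comm]

theorem jacobianDerivation_apply_self (D : Fin (n + 1) → Derivation k A A) (b : Fin n → A)
    (i : Fin n) : jacobianDerivation D b (b i) = 0 := by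
  rw [jacobianDerivation_apply]
  refine Matrix.det_zero_of_row_eq (Fin.succ_ne_zero i).symm ?_
  ext j
  simp only [Matrix.of_apply, Fin.cons_zero, Fin.cons_succ]

end JacobianDerivation

section PoissonBracket

variable {m : ℕ} {D : Fin (m + 2) → Derivation ℂ (FB m) (FB m)} {s t : Fin m → PA m}
  {γ : Fin m → Bool × Bool}

/-- The Hamiltonian derivation `{·, g}` of the rational function field. -/
def hamiltonian (D : Fin (m + 2) → Derivation ℂ (FB m) (FB m)) (s t : Fin m → PA m) (g : FB m) :
    Derivation ℂ (FB m) (FB m) :=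
  algebraMap (PA m) (FB m) ((∏ i, t i) ^ 2) • jacobianDerivation D (Fin.cons g
    fun i => algebraMap (PA m) (FB m) (s i) / algebraMap (PA m) (FB m) (t i))

theorem hamiltonian_apply (D : Fin (m + 2) → Derivation ℂ (FB m) (FB m)) (s t : Fin m → PA m)
    (f g : FB m) : hamiltonian D s t g f = brB D s t f g := by
  rw [hamiltonian, Derivation.smul_apply, jacobianDerivation_apply, smul_eq_mul, brB, Jac]

theorem hamiltonian_div_eq_zero (D : Fin (m + 2) → Derivation ℂ (FB m) (FB m))
    (s t : Fin m → PA m) (g : FB m) (i : Fin m) :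
    hamiltonian D s t g (algebraMap (PA m) (FB m) (s i) / algebraMap (PA m) (FB m) (t i)) = 0 := by
  have hself := jacobianDerivation_apply_self D (Fin.cons g
    fun i => algebraMap (PA m) (FB m) (s i) / algebraMap (PA m) (FB m) (t i)) i.succ
  rw [Fin.cons_succ] at hself
  rw [hamiltonian, Derivation.smul_apply, hself, smul_zero]

theorem hamiltonian_eq_zero_of_mem_Cgam (D : Fin (m + 2) → Derivation ℂ (FB m) (FB m))
    (g : FB m) {c : FB m} (hc : c ∈ Cgam s t γ) : hamiltonian D s t g c = 0 := by
  refine Derivation.eqOn_adjoin (D2 := 0) ?_ hc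
  rintro _ ⟨i, rfl⟩
  rw [Derivation.zero_apply, vgam]
  split_ifs
  · exact hamiltonian_div_eq_zero D s t g i
  · rw [← inv_div, Derivation.leibniz_inv, hamiltonian_div_eq_zero, smul_zero]

theorem algebraMap_mem_Agam (p : PA m) : algebraMap (PA m) (FB m) p ∈ Agam s t γ :=
  Algebra.subset_adjoin (Or.inl ⟨p, rfl⟩)

theorem mapsTo_Agam_of_isPartialDerivs (hD : IsPartialDerivs D) (j : Fin (m + 2)) :
    Set.MapsTo (D j) (Agam s t γ) (Agam s t γ) := by
  refine mapsTo_adjoin_of_forall_mem_adjoin ?_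
  rintro _ (⟨p, rfl⟩ | ⟨p, hp, rfl⟩)
  · rw [hD]
    exact algebraMap_mem_Agam _
  · have hinv : (algebraMap (PA m) (FB m) p)⁻¹ ∈ Agam s t γ :=
      Algebra.subset_adjoin (Or.inr ⟨p, hp, rfl⟩)
    rw [Derivation.leibniz_inv, hD]
    exact mul_mem (neg_mem (pow_mem hinv 2)) (algebraMap_mem_Agam _)

theorem brB_eq_det (hD : IsPartialDerivs D) (ht : ∀ i, t i ≠ 0) (f g : FB m) :
    brB D s t f g = (Matrix.of fun i j => (Fin.cons (D j f) (Fin.cons (D j g) fun i =>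
      algebraMap (PA m) (FB m) (t i * pderiv j (s i) - s i * pderiv j (t i))) :
        Fin (m + 2) → FB m) i).det := by
  let scale : Fin (m + 2) → FB m :=
    Fin.cons 1 (Fin.cons 1 fun i => algebraMap (PA m) (FB m) (t i) ^ 2)
  have hscale : algebraMap (PA m) (FB m) ((∏ i, t i) ^ 2) = ∏ i, scale i := by
    simp only [scale, Fin.prod_univ_succ, Fin.cons_zero, Fin.cons_succ, one_mul, map_pow, map_prod,
      Finset.prod_pow]
  rw [brB, Jac, hscale, ← Matrix.det_mul_column]
  congr 1
  ext i j
  refine Fin.cases ?_ (Fin.cases ?_ fun i => ?_) i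
  · simp [scale]
  · simp [scale]
  · have hti : algebraMap (PA m) (FB m) (t i) ≠ 0 := by simpa using ht i
    simp only [scale, Matrix.of_apply, Fin.cons_succ, Derivation.leibniz_div, smul_eq_mul,
      hD j (s i), hD j (t i), map_sub, map_mul]
    field_simp

theorem brB_mem_Agam (hD : IsPartialDerivs D) (ht : ∀ i, t i ≠ 0) {f g : FB m}
    (hf : f ∈ Agam s t γ) (hg : g ∈ Agam s t γ) : brB D s t f g ∈ Agam s t γ := by
  rw [brB_eq_det hD ht]
  refine det_mem_subalgebra _ fun i j => ?_
  refine Fin.cases ?_ (Fin.cases ?_ fun i => ?_) i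
  · exact mapsTo_Agam_of_isPartialDerivs hD j hf
  · exact mapsTo_Agam_of_isPartialDerivs hD j hg
  · exact algebraMap_mem_Agam _

/-- The Hamiltonian derivation `{·, r}` of `A_γ`. -/
def hamiltonianAgam (hD : IsPartialDerivs D) (ht : ∀ i, t i ≠ 0) (r : Agam s t γ) :
    Derivation ℂ (Agam s t γ) (Agam s t γ) :=
  restrictDerivation (hamiltonian D s t r) (Agam s t γ) fun f hf => by
    rw [hamiltonian_apply]
    exact brB_mem_Agam hD ht hf r.2

theorem coe_hamiltonianAgam (hD : IsPartialDerivs D) (ht : ∀ i, t i ≠ 0) (q r : Agam s t γ) :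
    (hamiltonianAgam hD ht r q : FB m) = brB D s t q r :=
  hamiltonian_apply D s t q r

/-- Poisson ideals of `A_γ`. The bracket takes values in `B`, so membership of `{q, r}` in `Q` is
expressed by a witness in `Q`. -/
def IsPoissonIdeal (D : Fin (m + 2) → Derivation ℂ (FB m) (FB m)) (Q : Ideal (Agam s t γ)) :
    Prop :=
  ∀ q ∈ Q, ∀ r : Agam s t γ, ∃ w ∈ Q, brB D s t (q : FB m) (r : FB m) = (w : FB m)

theorem isPoissonIdeal_iff_forall_mapsTo (hD : IsPartialDerivs D) (ht : ∀ i, t i ≠ 0)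
    {Q : Ideal (Agam s t γ)} :
    IsPoissonIdeal D Q ↔ ∀ r : Agam s t γ, Set.MapsTo (hamiltonianAgam hD ht r) Q Q := by
  constructor
  · intro hQ r q hq
    obtain ⟨w, hw, hqr⟩ := hQ q hq r
    rwa [SetLike.mem_coe, Subtype.ext ((coe_hamiltonianAgam hD ht q r).trans hqr)]
  · exact fun hQ q hq r => ⟨_, hQ r hq, (coe_hamiltonianAgam hD ht q r).symm⟩

theorem isPoissonIdeal_of_mem_minimalPrimes (hD : IsPartialDerivs D) (ht : ∀ i, t i ≠ 0)
    {J Q : Ideal (Agam s t γ)} (hJ : IsPoissonIdeal D J) (hQ : Q ∈ J.minimalPrimes) :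
    IsPoissonIdeal D Q := by
  let _ : Algebra ℚ (Agam s t γ) := Algebra.compHom _ (algebraMap ℚ ℂ)
  rw [isPoissonIdeal_iff_forall_mapsTo hD ht] at hJ ⊢
  exact fun r => mapsTo_of_mem_minimalPrimes (hJ r) hQ

theorem isPoissonIdeal_map_inclusion (hD : IsPartialDerivs D) (ht : ∀ i, t i ≠ 0)
    (hsub : Cgam s t γ ≤ Agam s t γ) (I : Ideal (Cgam s t γ)) :
    IsPoissonIdeal D (Ideal.map (Subalgebra.inclusion hsub) I) := by
  rw [isPoissonIdeal_iff_forall_mapsTo hD ht]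
  intro r
  refine mapsTo_span_of_forall_mem_span ?_
  rintro _ ⟨c, _, rfl⟩
  have hkill : hamiltonianAgam hD ht r (Subalgebra.inclusion hsub c) = 0 :=
    Subtype.ext (hamiltonian_eq_zero_of_mem_Cgam D r c.2)
  exact hkill ▸ zero_mem _

end PoissonBracket

theorem statement_8_general {m : ℕ}
    (D : Fin (m + 2) → Derivation ℂ (FB m) (FB m)) (hD : IsPartialDerivs D)
    (s t : Fin m → PA m)
    (ht : ∀ i, t i ≠ 0)
    (γ : Fin m → Bool × Bool)
    (hsub : Cgam s t γ ≤ Agam s t γ)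
    (I : Ideal (Cgam s t γ))
    (Q : Ideal (Agam s t γ))
    (hQ : Q ∈ (Ideal.map (Subalgebra.inclusion hsub) I).minimalPrimes) :
    Q.IsPrime ∧ IsPoissonIdeal D Q :=
  ⟨hQ.1.1,
    isPoissonIdeal_of_mem_minimalPrimes hD ht (isPoissonIdeal_map_inclusion hD ht hsub I) hQ⟩

theorem statement_8 {m : ℕ} (hm : 1 ≤ m)
    (D : Fin (m + 2) → Derivation ℂ (FB m) (FB m)) (hD : IsPartialDerivs D)
    (s t : Fin m → PA m)
    (ht : ∀ i, t i ≠ 0)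
    (hcop : ∀ i, ∀ d : PA m, d ∣ s i → d ∣ t i → IsUnit d)
    (hind : AlgebraicIndependent ℂ
      (fun i => algebraMap (PA m) (FB m) (s i) / algebraMap (PA m) (FB m) (t i)))
    (γ : Fin m → Bool × Bool) (hdense : ∀ i, γ i ≠ (false, false))
    (hsub : Cgam s t γ ≤ Agam s t γ)
    (I : Ideal (Cgam s t γ))
    (Q : Ideal (Agam s t γ))
    (hQ : Q ∈ (Ideal.map (Subalgebra.inclusion hsub) I).minimalPrimes) :
    Q.IsPrime ∧ ∀ q ∈ Q, ∀ r : Agam s t γ,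
      ∃ w ∈ Q, brB D s t (q : FB m) (r : FB m) = (w : FB m) :=
  statement_8_general D hD s t ht γ hsub I Q hQ

end
end
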